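/- Let p be a prime and let R be a finite p-group that is not cyclic, and suppose there exists a subgroup H of R such that every automorphism of R fixing H setwise is a power automorphism. Then p = 2. -/

import Mathlib

/-!
Let `p` be odd.  Conjugation by an element normalizing `H` is a power automorphism, so the
normalizer of `H` lies in the norm `K` of `R`, the intersection of the normalizers of all
subgroups.  All subgroups of `K` are normal in `K`.

A homomorphism `φ : R → ZMod p` trivial on `H`, together with an element `c` of order `p` killed by
`φ` and satisfying `⁅c, y⁆ = z ^ φ y` for a central `z`, yields an automorphism
`y ↦ y * c ^ φ y * z ^ (φ y ^ 2 / 2)` which fixes `H` pointwise and must therefore be a power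
automorphism.  For central `c` (and `z = 1`) this places `c` in every cyclic subgroup not contained
in `ker φ`, so that `R` has at most one central subgroup of order `p`.  For `φ` read off from the
commutators of `c` it shows that `c` is central; climbing the upper central series, every element of
order `p` in `K` is central.

Hence `K` has at most one subgroup of order `p`, which makes `K` cyclic since `p` is odd.  Subgroups
of a cyclic normal subgroup are normal, so `H` is normal, `R = K`, and `R` is cyclic.
-/

open Subgroup
open scoped commutatorElement

section Powers

variable {G : Type*} [Group G]

lemma pow_val_add {n : ℕ} [NeZero n] {g : G} (hg : g ^ n = 1) (a b : ZMod n) :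
    g ^ (a + b).val = g ^ a.val * g ^ b.val := by
  rw [ZMod.val_add, ← pow_eq_pow_mod _ hg, pow_add]

lemma pow_val_mul {n : ℕ} {g : G} (hg : g ^ n = 1) (a b : ZMod n) :
    g ^ (a * b).val = (g ^ a.val) ^ b.val := by
  rw [ZMod.val_mul, ← pow_eq_pow_mod _ hg, pow_mul]

lemma pow_val_eq_one_iff {n : ℕ} [NeZero n] {g : G} (hg : orderOf g = n) {a : ZMod n} :
    g ^ a.val = 1 ↔ a = 0 := by
  rw [← orderOf_dvd_iff_pow_eq_one, hg, ← ZMod.natCast_eq_zero_iff, ZMod.natCast_zmod_val]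

lemma mem_zpowers_pow_val {p : ℕ} [Fact p.Prime] {g : G} (hg : g ^ p = 1) {a : ZMod p}
    (ha : a ≠ 0) : g ∈ zpowers (g ^ a.val) := by
  have hga : (g ^ a.val) ^ (a⁻¹).val = g := by
    rw [← pow_val_mul hg, mul_inv_cancel₀ ha, ZMod.val_one, pow_one]
  simpa only [hga] using npow_mem_zpowers (g ^ a.val) (a⁻¹).val

lemma commute_of_mem_zpowers {a b : G} (h : a ∈ zpowers b) : Commute a b := by
  obtain ⟨i, rfl⟩ := mem_zpowers_iff.1 h
  exact (Commute.refl b).zpow_left i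

lemma zpowers_eq_of_mem_of_pow_prime_eq_one {p : ℕ} [Fact p.Prime] {a b : G} (ha : a ^ p = 1)
    (hb : b ∈ zpowers a) (hb1 : b ≠ 1) : zpowers b = zpowers a := by
  have hbp : b ^ p = 1 := by
    obtain ⟨i, rfl⟩ := mem_zpowers_iff.1 hb
    rw [← zpow_natCast, zpow_comm, zpow_natCast, ha, one_zpow]
  have ha1 : a ≠ 1 := by
    rintro rfl
    exact hb1 (by simpa using hb)
  have hcard : Nat.card (zpowers a) = p := by rw [Nat.card_zpowers, orderOf_eq_prime ha ha1]
  have : Finite (zpowers a) :=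
    Nat.finite_of_card_ne_zero (hcard.symm ▸ (Fact.out : p.Prime).ne_zero)
  refine eq_of_le_of_card_ge (zpowers_le.2 hb) ?_
  rw [hcard, Nat.card_zpowers, orderOf_eq_prime hbp hb1]

lemma mem_zpowers_of_pow_orderOf_eq_one [Finite G] [IsCyclic G] {a b : G}
    (hb : b ^ orderOf a = 1) : b ∈ zpowers a := by
  classical
  have := Fintype.ofFinite G
  have hsub : (zpowers a : Set G).toFinset ⊆ Finset.univ.filter (· ^ orderOf a = 1) := by
    intro x hx
    simpa using orderOf_dvd_iff_pow_eq_one.1 (orderOf_dvd_of_mem_zpowers (Set.mem_toFinset.1 hx))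
  have hcard : (zpowers a : Set G).toFinset.card = orderOf a := by
    rw [Set.toFinset_card, ← Nat.card_eq_fintype_card]
    exact Nat.card_zpowers a
  have heq := Finset.eq_of_subset_of_card_le hsub
    ((IsCyclic.card_pow_eq_one_le (orderOf_pos a)).trans_eq hcard.symm)
  exact Set.mem_toFinset.1 (heq ▸ Finset.mem_filter.2 ⟨Finset.mem_univ b, hb⟩)

lemma mem_zpowers_of_mem_zpowers_of_pow_orderOf_eq_one [Finite G] {x a b : G}
    (ha : a ∈ zpowers x) (hb : b ∈ zpowers x) (hab : b ^ orderOf a = 1) : b ∈ zpowers a := by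
  have hmem : (⟨b, hb⟩ : zpowers x) ∈ zpowers (⟨a, ha⟩ : zpowers x) :=
    mem_zpowers_of_pow_orderOf_eq_one (Subtype.ext (by simpa using hab))
  simpa using mem_map_of_mem (zpowers x).subtype hmem

end Powers

section Commutators

variable {G : Type*} [Group G] {a b : G}

lemma commutatorElement_eq_mul_conj_inv (a b : G) : ⁅a, b⁆ = a * (b * a⁻¹ * b⁻¹) := by
  rw [commutatorElement_def]
  group

lemma commutatorElement_mem_left {N : Subgroup G} [N.Normal] (ha : a ∈ N) (b : G) :
    ⁅a, b⁆ ∈ N := by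
  rw [commutatorElement_eq_mul_conj_inv]
  exact mul_mem ha (‹N.Normal›.conj_mem _ (inv_mem ha) b)

lemma commutatorElement_mul_mul (a b : G) : ⁅a, b⁆ * (b * a) = a * b := by
  rw [commutatorElement_def]
  group

lemma commutatorElement_mem_zpowers_right (h : a * b * a⁻¹ ∈ zpowers b) : ⁅a, b⁆ ∈ zpowers b :=
  mul_mem h (inv_mem (mem_zpowers b))

lemma commutatorElement_mem_zpowers_left (h : b * a * b⁻¹ ∈ zpowers a) : ⁅a, b⁆ ∈ zpowers a := by
  rw [← commutatorElement_inv]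
  exact inv_mem (commutatorElement_mem_zpowers_right h)

lemma commutatorElement_pow_left (h : Commute ⁅a, b⁆ a) (n : ℕ) : ⁅a ^ n, b⁆ = ⁅a, b⁆ ^ n := by
  have hc := commutatorElement_eq_mul_conj_inv a b
  have ha : Commute a (b * a⁻¹ * b⁻¹) := by
    have hconj : b * a⁻¹ * b⁻¹ = a⁻¹ * ⁅a, b⁆ := by rw [hc]; group
    rw [hconj]
    exact (Commute.refl a).inv_right.mul_right h.symm
  rw [hc, ha.mul_pow, conj_pow, commutatorElement_def]
  group

lemma mul_pow_of_commute_commutatorElement (ha : Commute ⁅a, b⁆ a) (hb : Commute ⁅a, b⁆ b)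
    (n : ℕ) : (b * a) ^ n = ⁅a, b⁆ ^ n.choose 2 * (b ^ n * a ^ n) := by
  set c := ⁅a, b⁆ with hc
  induction n with
  | zero => simp
  | succ n ih =>
    have hab : a ^ n * b = c ^ n * (b * a ^ n) := by
      rw [hc, ← commutatorElement_pow_left ha, commutatorElement_mul_mul]
    calc (b * a) ^ (n + 1) = c ^ n.choose 2 * (b ^ n * (a ^ n * b) * a) := by
          rw [pow_succ, ih]; group
      _ = c ^ n.choose 2 * (b ^ n * c ^ n * (b * a ^ n * a)) := by
          rw [hab]; group
      _ = c ^ n.choose 2 * (c ^ n * b ^ n * (b * a ^ n * a)) := by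
          rw [(hb.pow_pow n n).eq]
      _ = c ^ (n + 1).choose 2 * (b ^ (n + 1) * a ^ (n + 1)) := by
          rw [Nat.choose_succ_succ' n 1, Nat.choose_one_right, add_comm n, pow_add, pow_succ b,
            pow_succ a]
          group

lemma commutatorElement_mul_right_of_mem_center {c x y : G} (h : ⁅c, y⁆ ∈ center G) :
    ⁅c, x * y⁆ = ⁅c, x⁆ * ⁅c, y⁆ := by
  rw [commutatorElement_mul_right_eq_mul_conj, mul_assoc, mul_assoc, ← mem_center_iff.1 h x⁻¹]
  group

end Commutators

section Dedekind

/-- Dedekind groups: every subgroup is normal. Commutative groups are included. -/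
def IsDedekindGroup (G : Type*) [Group G] : Prop :=
  ∀ H : Subgroup G, H.Normal

namespace IsDedekindGroup

variable {G : Type*} [Group G] {p : ℕ} [Fact p.Prime]

lemma conj_mem_zpowers (hG : IsDedekindGroup G) (g x : G) : g * x * g⁻¹ ∈ zpowers x :=
  (hG (zpowers x)).conj_mem x (mem_zpowers x) g

lemma commute_commutatorElement_left (hG : IsDedekindGroup G) (a b : G) : Commute ⁅a, b⁆ a :=
  commute_of_mem_zpowers (commutatorElement_mem_zpowers_left (hG.conj_mem_zpowers b a))

lemma commute_commutatorElement_right (hG : IsDedekindGroup G) (a b : G) : Commute ⁅a, b⁆ b :=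
  commute_of_mem_zpowers (commutatorElement_mem_zpowers_right (hG.conj_mem_zpowers a b))

lemma commute_of_pow_prime_eq_one (hG : IsDedekindGroup G) {h : G} (hh : h ^ p = 1) (k : G) :
    Commute h k := by
  by_cases hc : ⁅h, k⁆ = 1
  · exact commutatorElement_eq_one_iff_commute.1 hc
  have hc_left := commutatorElement_mem_zpowers_left (hG.conj_mem_zpowers k h)
  have hc_right := commutatorElement_mem_zpowers_right (hG.conj_mem_zpowers h k)
  have hle : zpowers h ≤ zpowers k := by
    rw [← zpowers_eq_of_mem_of_pow_prime_eq_one hh hc_left hc]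
    exact zpowers_le.2 hc_right
  exact commute_of_mem_zpowers (hle (mem_zpowers h))

lemma inv_mul_pow_prime_eq_one (hG : IsDedekindGroup G) (hp2 : p ≠ 2) {s y : G}
    (h : s ^ p = y ^ p) : (s⁻¹ * y) ^ p = 1 := by
  have hp : p.Prime := Fact.out
  have hleft := hG.commute_commutatorElement_left y s⁻¹
  have hcomm : Commute (y ^ p) s⁻¹ := h ▸ ((Commute.refl s).pow_left p).inv_right
  have hcp : ⁅y, s⁻¹⁆ ^ p = 1 := by
    rw [← commutatorElement_pow_left hleft, hcomm.commutator_eq]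
  obtain ⟨q, hq⟩ : p ∣ p.choose 2 :=
    hp.dvd_choose_self two_ne_zero (hp.two_le.lt_of_ne' hp2)
  rw [mul_pow_of_commute_commutatorElement hleft (hG.commute_commutatorElement_right y s⁻¹), hq,
    pow_mul, hcp, one_pow, one_mul, inv_pow, h, inv_mul_cancel]

end IsDedekindGroup

end Dedekind

section PGroup

variable {G : Type*} [Group G] {p : ℕ}

lemma exists_notMem_pow_mem_of_isPGroup (hG : IsPGroup p G) {S : Subgroup G} (hS : S ≠ ⊤) :
    ∃ y ∉ S, y ^ p ∈ S := by
  classical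
  obtain ⟨x, hx⟩ : ∃ x, x ∉ S := by
    by_contra! h
    exact hS (eq_top_iff.2 fun x _ ↦ h x)
  have hex : ∃ k, x ^ p ^ k ∈ S := (isPGroup_iff_pow_pow_eq_one.1 hG x).imp fun k hk ↦ by
    rw [hk]
    exact one_mem S
  have hpos : Nat.find hex ≠ 0 := fun h0 ↦ hx (by simpa [h0] using Nat.find_spec hex)
  obtain ⟨k, hk⟩ := Nat.exists_eq_succ_of_ne_zero hpos
  refine ⟨x ^ p ^ k, Nat.find_min hex (by lia), ?_⟩
  rw [← pow_mul, ← pow_succ, ← Nat.succ_eq_add_one, ← hk]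
  exact Nat.find_spec hex

variable [Fact p.Prime]

lemma exists_mem_zpowers_pow_eq_of_orderOf_le [Finite G] (hG : IsPGroup p G) {g y : G}
    (hle : orderOf y ≤ orderOf g) (hy : y ^ p ∈ zpowers g) : ∃ s ∈ zpowers g, s ^ p = y ^ p := by
  have hp : p.Prime := Fact.out
  rcases eq_or_ne y 1 with rfl | hy1
  · exact ⟨1, one_mem _, rfl⟩
  obtain ⟨m, hm : g ^ m = y ^ p⟩ := mem_powers_iff_mem_zpowers.2 hy
  obtain ⟨k, rfl⟩ : p ∣ m := by
    by_contra hpm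
    have hord : orderOf (y ^ p) = orderOf g :=
      hm ▸ (hG.orderOf_coprime ((Nat.Prime.coprime_iff_not_dvd hp).2 hpm) g).orderOf_pow
    rw [orderOf_pow_of_dvd hp.ne_zero (hG.dvd_orderOf hy1)] at hord
    exact (Nat.div_lt_self (orderOf_pos y) hp.one_lt).not_ge (hord ▸ hle)
  exact ⟨g ^ k, npow_mem_zpowers g k, by rw [← pow_mul, mul_comm, hm]⟩

theorem IsDedekindGroup.isCyclic_of_isPGroup [Finite G] (hded : IsDedekindGroup G)
    (hG : IsPGroup p G) (hp2 : p ≠ 2)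
    (huniq : ∀ a b : G, a ^ p = 1 → b ^ p = 1 → a ≠ 1 → b ∈ zpowers a) : IsCyclic G := by
  obtain ⟨g, hg⟩ := Finite.exists_max (orderOf : G → ℕ)
  refine isCyclic_iff_exists_zpowers_eq_top.2 ⟨g, ?_⟩
  by_contra hne
  obtain ⟨y, hyg, hyp⟩ := exists_notMem_pow_mem_of_isPGroup hG hne
  obtain ⟨s, hs, hsy⟩ := exists_mem_zpowers_pow_eq_of_orderOf_le hG (hg y) hyp
  have hg1 : g ≠ 1 := by
    rintro rfl
    have hy1 : y = 1 := orderOf_eq_one_iff.1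
      (le_antisymm (by simpa using hg y) (orderOf_pos y))
    exact hyg (by rw [hy1]; exact one_mem _)
  have hω : orderOf (g ^ (orderOf g / p)) = p :=
    orderOf_pow_orderOf_div (orderOf_pos g).ne' (hG.dvd_orderOf hg1)
  have hω1 : g ^ (orderOf g / p) ≠ 1 := fun h ↦
    (Fact.out : p.Prime).one_lt.ne (by rw [← hω, h, orderOf_one])
  have hsy_mem : s⁻¹ * y ∈ zpowers g :=
    zpowers_le.2 (npow_mem_zpowers g _) <| huniq _ _
      (orderOf_dvd_iff_pow_eq_one.1 hω.dvd) (hded.inv_mul_pow_prime_eq_one hp2 hsy) hω1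
  exact hyg ((mul_mem_cancel_left (inv_mem hs)).1 hsy_mem)

lemma exists_normal_index_eq_of_isPGroup [Finite G] (hG : IsPGroup p G) {H : Subgroup G}
    (hH : H ≠ ⊤) : ∃ M : Subgroup G, M.Normal ∧ M.index = p ∧ H ≤ M := by
  have hp : p.Prime := Fact.out
  obtain ⟨N, hN⟩ := IsPGroup.iff_card.1 hG
  obtain ⟨n, hn⟩ := IsPGroup.iff_card.1 (hG.to_subgroup H)
  have hnN : n < N := by
    refine lt_of_le_of_ne ?_ fun h ↦ hH (H.eq_top_of_card_eq (by rw [hn, hN, h]))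
    exact (Nat.pow_dvd_pow_iff_le_right hp.one_lt).1 (hn ▸ hN ▸ H.card_subgroup_dvd_card)
  obtain ⟨m, rfl⟩ := Nat.exists_eq_succ_of_ne_zero (Nat.ne_zero_of_lt hnN)
  obtain ⟨M, hM, hHM⟩ := Sylow.exists_subgroup_card_pow_prime_le p
    (hN ▸ pow_dvd_pow p m.le_succ) H hn (Nat.lt_succ_iff.1 hnN)
  have hindex : M.index = p := by
    have hmul := M.card_mul_index
    rw [hM, hN, pow_succ] at hmul
    exact Nat.eq_of_mul_eq_mul_left (pow_pos hp.pos m) hmul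
  refine ⟨M, normal_of_index_eq_minFac_card ?_, hindex, hHM⟩
  rw [hindex, hN, hp.pow_minFac m.succ_ne_zero]

lemma exists_monoidHom_zmod_of_isPGroup [Finite G] (hG : IsPGroup p G) {H : Subgroup G}
    (hH : H ≠ ⊤) : ∃ φ : G →* Multiplicative (ZMod p), H ≤ φ.ker ∧ φ ≠ 1 := by
  have hp : p.Prime := Fact.out
  obtain ⟨M, hMn, hM, hHM⟩ := exists_normal_index_eq_of_isPGroup hG hH
  have hcard : Nat.card (Multiplicative (ZMod p)) = p := Nat.card_zmod p
  let φ : G →* Multiplicative (ZMod p) :=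
    (mulEquivOfPrimeCardEq (p := p) hM hcard).toMonoidHom.comp (QuotientGroup.mk' M)
  have hker : φ.ker = M := by
    ext y
    simp [φ]
  refine ⟨φ, hHM.trans hker.ge, fun h1 ↦ hp.one_lt.ne ?_⟩
  rw [← hM, ← hker, h1, MonoidHom.ker_one, index_top]

end PGroup

section BaerNorm

variable {G : Type*} [Group G]

variable (G) in
/-- The norm (or kern) of a group in the sense of Baer: the elements normalizing every subgroup.
It suffices to normalize the cyclic subgroups. -/
def baerNorm : Subgroup G :=
  ⨅ x : G, normalizer (zpowers x : Set G)

lemma le_baerNorm_iff {S : Subgroup G} :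
    S ≤ baerNorm G ↔ ∀ k ∈ S, ∀ x, k * x * k⁻¹ ∈ zpowers x := by
  simp only [baerNorm, le_iInf_iff, zpowers_eq_closure, le_normalizer_closure_iff,
    Set.mem_singleton_iff, forall_eq]
  exact forall_comm.trans (forall_congr' fun _ ↦ forall_comm)

lemma conj_mem_zpowers_of_mem_baerNorm {k : G} (hk : k ∈ baerNorm G) (x : G) :
    k * x * k⁻¹ ∈ zpowers x :=
  le_baerNorm_iff.1 le_rfl k hk x

instance normal_baerNorm : (baerNorm G).Normal := by
  have hmap (g : G) : (baerNorm G).map (MulAut.conj g).toMonoidHom ≤ baerNorm G := by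
    rw [le_baerNorm_iff]
    rintro _ ⟨k, hk, rfl⟩ x
    have := mem_map_of_mem (MulAut.conj g).toMonoidHom
      (conj_mem_zpowers_of_mem_baerNorm hk (g⁻¹ * x * g))
    simpa [MonoidHom.map_zpowers, mul_assoc] using this
  exact ⟨fun k hk g ↦ hmap g (mem_map_of_mem _ hk)⟩

lemma isDedekindGroup_baerNorm : IsDedekindGroup (baerNorm G) := by
  refine fun S ↦ ⟨fun x hx k ↦ ?_⟩
  obtain ⟨i, hi⟩ := mem_zpowers_iff.1 (conj_mem_zpowers_of_mem_baerNorm k.2 (x : G))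
  have hconj : x ^ i = k * x * k⁻¹ := Subtype.ext (by simpa using hi)
  exact hconj ▸ zpow_mem hx i

lemma commute_of_mem_baerNorm {p : ℕ} [Fact p.Prime] {h k : G} (hh : h ∈ baerNorm G)
    (hhp : h ^ p = 1) (hk : k ∈ baerNorm G) : Commute h k :=
  congrArg Subtype.val <| isDedekindGroup_baerNorm.commute_of_pow_prime_eq_one
    (h := ⟨h, hh⟩) (Subtype.ext hhp) ⟨k, hk⟩

lemma commutatorElement_pow_prime_eq_one_of_mem_baerNorm {p : ℕ} [Fact p.Prime] {h : G}
    (hh : h ∈ baerNorm G) (hhp : h ^ p = 1) (y : G) : ⁅h, y⁆ ^ p = 1 := by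
  have hcomm : Commute h (y * h⁻¹ * y⁻¹) :=
    commute_of_mem_baerNorm hh hhp (normal_baerNorm.conj_mem _ (inv_mem hh) y)
  rw [commutatorElement_eq_mul_conj_inv, hcomm.mul_pow, hhp, conj_pow, inv_pow, hhp, inv_one,
    mul_one, mul_inv_cancel, mul_one]

end BaerNorm

lemma normal_of_le_normal_of_isCyclic {G : Type*} [Group G] {H K : Subgroup G} [K.Normal]
    [IsCyclic K] (h : H ≤ K) : H.Normal := by
  obtain ⟨g, rfl⟩ := (Subgroup.isCyclic_iff_exists_zpowers_eq_top K).1 ‹_›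
  refine ⟨fun k hk x ↦ ?_⟩
  obtain ⟨j, rfl⟩ := mem_zpowers_iff.1 (h hk)
  obtain ⟨i, hi⟩ := mem_zpowers_iff.1 (‹(zpowers g).Normal›.conj_mem g (mem_zpowers g) x)
  rw [← conj_zpow, ← hi, zpow_comm]
  exact zpow_mem hk i

section Shear

variable {G : Type*} [Group G] {n : ℕ}

lemma pow_val_mul_comm {z c y : G} {a b : ZMod n} (hz : z ∈ center G) (hzn : z ^ n = 1)
    (h : ⁅c, y⁆ = z ^ b.val) : c ^ a.val * y = y * c ^ a.val * z ^ (a * b).val := by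
  have hzc : ⁅c, y⁆ ∈ center G := h ▸ pow_mem hz _
  have hpow : ⁅c ^ a.val, y⁆ = z ^ (a * b).val := by
    rw [commutatorElement_pow_left (mem_center_iff.1 hzc c).symm, h, mul_comm a, pow_val_mul hzn]
  rw [← commutatorElement_mul_mul, hpow, mem_center_iff.1 (pow_mem hz _)]

variable [NeZero n]

-- Here `e` stands for `1 / 2`: expanding `e * (a + b) ^ 2` produces the factor `z ^ (a * b)` that
-- arises when `c ^ a` is moved past `y`.
lemma pow_val_shear_add {e : ZMod n} {c z y : G} (he : z ^ (2 * e).val = z) (hc : c ^ n = 1)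
    (hz : z ^ n = 1) (hzc : z ∈ center G) (a : ZMod n) {b : ZMod n} (h : ⁅c, y⁆ = z ^ b.val) :
    c ^ (a + b).val * z ^ (e * (a + b) ^ 2).val =
      y⁻¹ * (c ^ a.val * z ^ (e * a ^ 2).val) * y * (c ^ b.val * z ^ (e * b ^ 2).val) := by
  have hzpow (i : ℕ) (g : G) : g * z ^ i = z ^ i * g := mem_center_iff.1 (pow_mem hzc i) g
  have hsq : e * (a + b) ^ 2 = 2 * e * (a * b) + e * a ^ 2 + e * b ^ 2 := by ring
  have htwo : z ^ (2 * e * (a * b)).val = z ^ (a * b).val := by rw [pow_val_mul hz, he]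
  calc c ^ (a + b).val * z ^ (e * (a + b) ^ 2).val
      = c ^ a.val * (c ^ b.val * (z ^ (a * b).val * z ^ (e * a ^ 2).val)) *
          z ^ (e * b ^ 2).val := by
        simp only [pow_val_add hc, hsq, pow_val_add hz, htwo]
        group
    _ = y⁻¹ * (y * c ^ a.val * z ^ (a * b).val) * z ^ (e * a ^ 2).val *
          (c ^ b.val * z ^ (e * b ^ 2).val) := by
        rw [← pow_add, hzpow _ (c ^ b.val), pow_add]
        group
    _ = y⁻¹ * (c ^ a.val * z ^ (e * a ^ 2).val) * y * (c ^ b.val * z ^ (e * b ^ 2).val) := by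
        rw [← pow_val_mul_comm hzc hz h, mul_assoc y⁻¹, mul_assoc _ y, hzpow _ y]
        group

lemma exists_mulAut_shear {e : ZMod n} {c z : G} (he : z ^ (2 * e).val = z)
    (φ : G →* Multiplicative (ZMod n)) (hc : c ^ n = 1) (hφc : φ c = 1) (hz : z ^ n = 1)
    (hφz : φ z = 1) (hzc : z ∈ center G) (hcomm : ∀ y, ⁅c, y⁆ = z ^ (φ y).toAdd.val) :
    ∃ α : MulAut G, ∀ y, α y = y * c ^ (φ y).toAdd.val * z ^ (e * (φ y).toAdd ^ 2).val := by
  let u (a : ZMod n) : G := c ^ a.val * z ^ (e * a ^ 2).val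
  have hφu (a : ZMod n) : φ (u a) = 1 := by simp [u, hφc, hφz]
  let α : G →* G := MonoidHom.mk' (fun y ↦ y * u (φ y).toAdd) fun x y ↦ by
    have hu : u ((φ x).toAdd + (φ y).toAdd) = y⁻¹ * u (φ x).toAdd * y * u (φ y).toAdd :=
      pow_val_shear_add he hc hz hzc _ (hcomm y)
    rw [map_mul, toAdd_mul, hu]
    group
  have hφα (y : G) : φ (α y) = φ y := by simp [α, hφu]
  have hinj : Function.Injective α := by
    intro x y hxy
    have hφ : φ x = φ y := by rw [← hφα, hxy, hφα]
    simpa [α, hφ] using hxy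
  have hsurj : Function.Surjective α := by
    intro y
    refine ⟨y * (u (φ y).toAdd)⁻¹, ?_⟩
    simp [α, hφu]
  exact ⟨MulEquiv.ofBijective α ⟨hinj, hsurj⟩, fun y ↦ (mul_assoc _ _ _).symm⟩

lemma exists_monoidHom_commutatorElement_eq_pow_val {c z : G} (hzc : z ∈ center G)
    (hz : orderOf z = n) (hc : ∀ y, ⁅c, y⁆ ∈ zpowers z) :
    ∃ φ : G →* Multiplicative (ZMod n), ∀ y, ⁅c, y⁆ = z ^ (φ y).toAdd.val := by
  let ψ : G →* zpowers z := MonoidHom.mk' (fun y ↦ ⟨⁅c, y⁆, hc y⟩) fun x y ↦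
    Subtype.ext (commutatorElement_mul_right_of_mem_center (zpowers_le.2 hzc (hc y)))
  have hgen (w : zpowers z) : w ∈ zpowers (⟨z, mem_zpowers z⟩ : zpowers z) := by
    obtain ⟨i, hi⟩ := mem_zpowers_iff.1 w.2
    exact mem_zpowers_iff.2 ⟨i, Subtype.ext hi⟩
  have hcard : Nat.card (zpowers z) = n := by rw [Nat.card_zpowers, hz]
  let σ : Multiplicative (ZMod n) ≃* zpowers z := zmodMulEquivOfGenerator hgen hcard
  have hσ (k : ZMod n) : (σ (.ofAdd k) : G) = z ^ k.val := by
    simpa only [Int.cast_natCast, ZMod.natCast_zmod_val, zpow_natCast, Subgroup.coe_pow]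
      using congrArg Subtype.val (zmodMulEquivOfGenerator_apply_ofAdd_intCast hgen hcard k.val)
  refine ⟨σ.symm.toMonoidHom.comp ψ, fun y ↦ (hσ _).symm.trans ?_ |>.symm⟩
  exact congrArg Subtype.val (σ.apply_symm_apply (ψ y))

end Shear

/-- The subgroup `H` has a setwise stabilizer in `Aut G` consisting of power automorphisms. -/
def HasPowerStabilizer {G : Type*} [Group G] (H : Subgroup G) : Prop :=
  ∀ α : MulAut G, H.map α.toMonoidHom = H → ∀ x, α x ∈ zpowers x

namespace HasPowerStabilizer

variable {G : Type*} [Group G] {H : Subgroup G}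

lemma exists_ne_top [Nontrivial G] (hH : HasPowerStabilizer H) :
    ∃ H' : Subgroup G, HasPowerStabilizer H' ∧ H' ≠ ⊤ := by
  by_cases htop : H = ⊤
  · refine ⟨⊥, fun α _ ↦ hH α ?_, bot_ne_top⟩
    rw [htop]
    exact map_top_of_surjective _ α.surjective
  · exact ⟨H, hH, htop⟩

lemma normalizer_le_baerNorm (hH : HasPowerStabilizer H) :
    normalizer (H : Set G) ≤ baerNorm G :=
  le_baerNorm_iff.2 fun k hk ↦ hH (MulAut.conj k) (mem_normalizer_iff_map_conj_eq.1 hk)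

lemma shear_mem_zpowers (hH : HasPowerStabilizer H) {n : ℕ} [NeZero n]
    {φ : G →* Multiplicative (ZMod n)} (hφ : H ≤ φ.ker) {e : ZMod n} {c z : G}
    (he : z ^ (2 * e).val = z) (hc : c ^ n = 1) (hφc : φ c = 1) (hz : z ^ n = 1) (hφz : φ z = 1)
    (hzc : z ∈ center G) (hcomm : ∀ y, ⁅c, y⁆ = z ^ (φ y).toAdd.val) (x : G) :
    c ^ (φ x).toAdd.val * z ^ (e * (φ x).toAdd ^ 2).val ∈ zpowers x := by
  obtain ⟨α, hα⟩ := exists_mulAut_shear he φ hc hφc hz hφz hzc hcomm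
  have hfix (h : G) (hh : h ∈ H) : α h = h := by simp [hα, MonoidHom.mem_ker.1 (hφ hh)]
  have hmap : H.map α.toMonoidHom = H := SetLike.coe_injective <|
    (Set.image_congr hfix).trans (Set.image_id' _)
  have hαx := hH α hmap x
  rwa [hα, mul_assoc, mul_mem_cancel_left (mem_zpowers x)] at hαx

variable {p : ℕ} [Fact p.Prime]

lemma mem_zpowers_of_mem_center (hH : HasPowerStabilizer H) {φ : G →* Multiplicative (ZMod p)}
    (hφ : H ≤ φ.ker) {c x : G} (hc : c ∈ center G) (hcp : c ^ p = 1) (hφc : φ c = 1)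
    (hφx : φ x ≠ 1) : c ∈ zpowers x := by
  have hcomm (y : G) : ⁅c, y⁆ = 1 ^ (φ y).toAdd.val := by
    rw [one_pow, commutatorElement_eq_one_iff_commute]
    exact (mem_center_iff.1 hc y).symm
  have hmem := hH.shear_mem_zpowers hφ (e := 0) (one_pow _) hcp hφc (one_pow p) (map_one φ)
    (one_mem _) hcomm x
  rw [one_pow, mul_one] at hmem
  exact zpowers_le.2 hmem (mem_zpowers_pow_val hcp hφx)

lemma mem_zpowers_of_mem_center_of_pow_prime_eq_one [Finite G] (hH : HasPowerStabilizer H)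
    (hG : IsPGroup p G) {a b : G} (ha : a ∈ center G) (hb : b ∈ center G) (hap : a ^ p = 1)
    (hbp : b ^ p = 1) (ha1 : a ≠ 1) : b ∈ zpowers a := by
  have : Nontrivial G := nontrivial_of_ne a 1 ha1
  obtain ⟨H', hH', htop⟩ := hH.exists_ne_top
  obtain ⟨φ, hφ, hφ1⟩ := exists_monoidHom_zmod_of_isPGroup hG htop
  obtain ⟨x, hφx⟩ := DFunLike.ne_iff.1 hφ1
  have key {c y : G} (hc : c ∈ center G) (hcp : c ^ p = 1) (hφc : φ c = 1) (hφy : φ y ≠ 1) :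
      c ∈ zpowers y := hH'.mem_zpowers_of_mem_center hφ hc hcp hφc hφy
  by_cases hφa : φ a = 1
  · by_cases hφb : φ b = 1
    · refine mem_zpowers_of_mem_zpowers_of_pow_orderOf_eq_one (key ha hap hφa hφx)
        (key hb hbp hφb hφx) ?_
      rwa [orderOf_eq_prime hap ha1]
    · rw [zpowers_eq_of_mem_of_pow_prime_eq_one hbp (key ha hap hφa hφb) ha1]
      exact mem_zpowers b
  · set j := (-(φ b).toAdd / (φ a).toAdd).val with hj
    have hφj : φ (b * a ^ j) = 1 := by
      refine Multiplicative.toAdd.injective ?_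
      have hφa0 : (φ a).toAdd ≠ 0 := hφa
      simp [hj, hφa0]
    have hmem : b * a ^ j ∈ zpowers a := by
      refine key (mul_mem hb (pow_mem ha j)) ?_ hφj hφa
      rw [Commute.mul_pow (mem_center_iff.1 (pow_mem ha j) b), hbp, pow_right_comm, hap, one_pow,
        one_mul]
    exact (mul_mem_cancel_right (npow_mem_zpowers a j)).1 hmem

variable (hp2 : p ≠ 2)

include hp2

lemma mem_center_of_commutatorElement_mem_zpowers (hH : HasPowerStabilizer H) {c z : G}
    (hcp : c ^ p = 1) (hcH : ∀ y ∈ H, Commute c y) (hz : z ∈ center G) (hzp : z ^ p = 1)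
    (hcz : ∀ y, ⁅c, y⁆ ∈ zpowers z) : c ∈ center G := by
  refine mem_center_iff.2 fun y ↦ ?_
  by_cases hz1 : z = 1
  · have hcy : ⁅c, y⁆ = 1 := by simpa [hz1] using hcz y
    exact (commutatorElement_eq_one_iff_commute.1 hcy).symm
  have hzord : orderOf z = p := orderOf_eq_prime hzp hz1
  obtain ⟨φ, hφ⟩ := exists_monoidHom_commutatorElement_eq_pow_val hz hzord hcz
  have hker {y : G} : φ y = 1 ↔ Commute c y := by
    rw [← commutatorElement_eq_one_iff_commute, hφ, pow_val_eq_one_iff hzord, toAdd_eq_zero]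
  by_cases hφy : φ y = 1
  · exact (hker.1 hφy).symm
  have htwo : z ^ (2 * 2⁻¹ : ZMod p).val = z := by
    rw [mul_inv_cancel₀ (Ring.two_ne_zero (by rwa [ZMod.ringChar_zmod_n])), ZMod.val_one, pow_one]
  have hmem := hH.shear_mem_zpowers (fun h hh ↦ hker.2 (hcH h hh)) htwo hcp
    (hker.2 (Commute.refl c)) hzp (hker.2 (mem_center_iff.1 hz c)) hz hφ y
  have hpow : Commute (c ^ (φ y).toAdd.val) y := by
    have := (commute_of_mem_zpowers hmem).mul_left
      (Commute.inv_left (mem_center_iff.1 (pow_mem hz (2⁻¹ * (φ y).toAdd ^ 2).val) y).symm)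
    rwa [mul_inv_cancel_right] at this
  obtain ⟨i, hi⟩ := mem_zpowers_iff.1 (mem_zpowers_pow_val hcp hφy)
  exact (hi ▸ hpow.zpow_left i).symm

lemma mem_center_of_commutatorElement_mem_center [Finite G] (hH : HasPowerStabilizer H)
    (hG : IsPGroup p G) {c : G} (hcp : c ^ p = 1) (hcH : ∀ y ∈ H, Commute c y)
    (hcenter : ∀ y, ⁅c, y⁆ ∈ center G) (hpow : ∀ y : G, ⁅c, y⁆ ^ p = 1) : c ∈ center G := by
  by_cases hall : ∀ y : G, ⁅c, y⁆ = 1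
  · exact mem_center_iff.2 fun y ↦ (commutatorElement_eq_one_iff_commute.1 (hall y)).symm
  obtain ⟨y₀, hy₀⟩ := not_forall.1 hall
  exact hH.mem_center_of_commutatorElement_mem_zpowers hp2 hcp hcH (hcenter y₀) (hpow y₀) fun y ↦
    hH.mem_zpowers_of_mem_center_of_pow_prime_eq_one hG (hcenter y₀) (hcenter y) (hpow y₀)
      (hpow y) hy₀

lemma mem_center_of_mem_baerNorm [Finite G] (hH : HasPowerStabilizer H) (hG : IsPGroup p G)
    {h : G} (hh : h ∈ baerNorm G) (hhp : h ^ p = 1) : h ∈ center G := by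
  have : Group.IsNilpotent G := hG.isNilpotent
  obtain ⟨n, hn⟩ := Group.IsNilpotent.nilpotent G
  have hhn : h ∈ Subgroup.upperCentralSeries G n := hn ▸ mem_top h
  clear hn
  induction n generalizing h with
  | zero =>
    rw [Subgroup.upperCentralSeries_zero, mem_bot] at hhn
    exact hhn ▸ one_mem _
  | succ n ih =>
    have hpow (y : G) : ⁅h, y⁆ ^ p = 1 :=
      commutatorElement_pow_prime_eq_one_of_mem_baerNorm hh hhp y
    have hcenter (y : G) : ⁅h, y⁆ ∈ center G :=
      ih (commutatorElement_mem_left hh y) (hpow y)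
        (Subgroup.mem_upperCentralSeries_succ_iff.1 hhn y)
    exact hH.mem_center_of_commutatorElement_mem_center hp2 hG hhp (fun y hy ↦
      commute_of_mem_baerNorm hh hhp (hH.normalizer_le_baerNorm (le_normalizer hy))) hcenter hpow

lemma isCyclic_baerNorm [Finite G] (hH : HasPowerStabilizer H) (hG : IsPGroup p G) :
    IsCyclic (baerNorm G) := by
  refine isDedekindGroup_baerNorm.isCyclic_of_isPGroup (hG.to_subgroup _) hp2
    fun a b ha hb ha1 ↦ ?_
  have hcenter (c : baerNorm G) (hc : c ^ p = 1) : (c : G) ∈ center G ∧ (c : G) ^ p = 1 :=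
    have hcp : (c : G) ^ p = 1 := congrArg Subtype.val hc
    ⟨hH.mem_center_of_mem_baerNorm hp2 hG c.2 hcp, hcp⟩
  obtain ⟨hac, hap⟩ := hcenter a ha
  obtain ⟨hbc, hbp⟩ := hcenter b hb
  obtain ⟨i, hi⟩ := mem_zpowers_iff.1 <| hH.mem_zpowers_of_mem_center_of_pow_prime_eq_one hG
    hac hbc hap hbp (by simpa using ha1)
  exact mem_zpowers_iff.2 ⟨i, Subtype.ext hi⟩

end HasPowerStabilizer

/-- Let `p` be a prime and `R` a finite non-cyclic `p`-group admitting a subgroup `H`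
such that every automorphism of `R` fixing `H` setwise is a power automorphism.  Then
`p = 2`. -/
theorem stmt14 (p : ℕ) (hp : p.Prime) (R : Type*) [Group R] [Finite R]
    (hpR : IsPGroup p R) (hnc : ¬ IsCyclic R) (H : Subgroup R)
    (hH : ∀ α : MulAut R, Subgroup.map α.toMonoidHom H = H →
      ∀ x : R, α x ∈ Subgroup.zpowers x) :
    p = 2 := by
  by_contra hp2
  have : Fact p.Prime := ⟨hp⟩
  have hpow : HasPowerStabilizer H := hH
  have : IsCyclic (baerNorm R) := hpow.isCyclic_baerNorm hp2 hpR
  have hnormal : H.Normal :=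
    normal_of_le_normal_of_isCyclic (le_normalizer.trans hpow.normalizer_le_baerNorm)
  have htop : baerNorm R = ⊤ :=
    top_le_iff.1 (normalizer_eq_top_iff.2 hnormal ▸ hpow.normalizer_le_baerNorm)
  rw [htop] at this
  exact hnc (topEquiv.isCyclic.1 this)
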